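/- Let S be a commutative monoid with identity e, and let ρ : S → ℝ satisfy ρ(e) = 1, ρ(xy) = ρ(x)ρ(y) for all x, y ∈ S, and 0 < ρ(s) < 1 for all s ∈ S with s ≠ e. For t ∈ [0,1) define ρ_t : S → ℝ by ρ_t(s) = ρ(s)^{t/(1−t)} (real power), and define ρ_1 = 1_e, the indicator function of {e}. Then: (i) each ρ_t belongs to S*_1 (in particular 1_e is multiplicative); (ii) ρ_0 is the constant function 1; and (iii) the map t ↦ ρ_t from [0,1] to S*_1 is continuous, i.e., it is a continuous path in S*_1 from the constant function 1 to 1_e. -/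

import Mathlib

/-!
For `b ∈ (0, 1)` the exponent `t / (1 - t)` tends to `∞` as `t → 1⁻`, so `b ^ (t / (1 - t))` tends
to `0`: pointwise, the powers of `ρ` deform the constant `1` into the indicator of `{1}`. That
indicator is multiplicative because `ρ x * ρ y = ρ 1 = 1` with both factors at most `1` forces
`ρ x = 1`, hence `x = 1`.
-/

open Filter Set Topology

theorem tendsto_div_one_sub_nhdsLT_one :
    Tendsto (fun t : ℝ ↦ t / (1 - t)) (𝓝[<] 1) atTop := by
  have denom_tendsto : Tendsto (fun t : ℝ ↦ 1 - t) (𝓝[<] 1) (𝓝[>] 0) := by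
    refine tendsto_nhdsWithin_iff.2 ⟨?_, ?_⟩
    · exact (Continuous.tendsto' (by fun_prop) _ _ (sub_self 1)).mono_left nhdsWithin_le_nhds
    · exact eventually_mem_nhdsWithin.mono fun t (ht : t < 1) ↦ sub_pos.2 ht
  exact (tendsto_nhdsWithin_of_tendsto_nhds tendsto_id).pos_mul_atTop one_pos
    denom_tendsto.inv_tendsto_nhdsGT_zero

theorem continuous_ite_rpow_div_one_sub {b : ℝ} (hb₀ : 0 < b) (hb₁ : b < 1) :
    Continuous fun t : ℝ ↦ if t < 1 then b ^ (t / (1 - t)) else 0 := by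
  have left_limit : Tendsto (fun t : ℝ ↦ b ^ (t / (1 - t))) (𝓝[<] 1) (𝓝 0) :=
    (tendsto_rpow_atTop_of_base_lt_one b (by linarith) hb₁).comp tendsto_div_one_sub_nhdsLT_one
  have continuousOn_left : ContinuousOn (fun t : ℝ ↦ b ^ (t / (1 - t))) (Iio 1) :=
    continuousOn_const.rpow
      (continuousOn_id.div (by fun_prop) fun t ht ↦ (sub_pos.2 ht).ne')
      fun _ _ ↦ Or.inl hb₀.ne'
  have eq_one_of_mem_frontier : ∀ t ∈ frontier {t : ℝ | t < 1}, t = 1 := fun t ht ↦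
    frontier_Iio.subset ht
  refine continuous_if' (fun t ht ↦ ?_) (fun t ht ↦ ?_) continuousOn_left continuousOn_const
  · obtain rfl := eq_one_of_mem_frontier t ht
    rw [if_neg (lt_irrefl _)]
    exact left_limit
  · obtain rfl := eq_one_of_mem_frontier t ht
    rw [if_neg (lt_irrefl _)]
    exact tendsto_const_nhds

/-- The space `S*_1` of `[0, 1]`-valued semicharacters of `S`; as a set of functions `S → ℝ` it
carries the topology of pointwise convergence. -/
def semicharSpace (S : Type*) [MulOneClass S] : Set (S → ℝ) :=
  {f | f 1 = 1 ∧ (∀ x y : S, f (x * y) = f x * f y) ∧ ∀ s : S, f s ∈ Icc (0 : ℝ) 1}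

/-- The family `ρ_t = ρ ^ (t / (1 - t))`, completed at `t = 1`, where the exponent would be the
junk value `1 / 0 = 0`, by the indicator of `{1}`. -/
noncomputable def rpowPath {S : Type*} [One S] [DecidableEq S] (ρ : S → ℝ) (t : unitInterval)
    (s : S) : ℝ :=
  if (t : ℝ) < 1 then ρ s ^ ((t : ℝ) / (1 - (t : ℝ))) else if s = 1 then 1 else 0

section MulOneClass

variable {S : Type*} [MulOneClass S] {ρ : S → ℝ}

theorem mem_semicharSpace_of_pos_of_lt_one (hρ1 : ρ 1 = 1)
    (hρmul : ∀ x y : S, ρ (x * y) = ρ x * ρ y) (hρlt : ∀ s : S, s ≠ 1 → 0 < ρ s ∧ ρ s < 1) :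
    ρ ∈ semicharSpace S := by
  refine ⟨hρ1, hρmul, fun s ↦ ?_⟩
  obtain rfl | hs := eq_or_ne s 1
  · simp [hρ1]
  · exact ⟨(hρlt s hs).1.le, (hρlt s hs).2.le⟩

theorem rpow_mem_semicharSpace (hρ : ρ ∈ semicharSpace S) {r : ℝ} (hr : 0 ≤ r) :
    (fun s ↦ ρ s ^ r) ∈ semicharSpace S := by
  obtain ⟨map_one, map_mul, mem_Icc⟩ := hρ
  refine ⟨by simp [map_one], fun x y ↦ ?_, fun s ↦ ⟨?_, ?_⟩⟩
  · simp only [map_mul, Real.mul_rpow (mem_Icc x).1 (mem_Icc y).1]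
  · exact Real.rpow_nonneg (mem_Icc s).1 r
  · exact Real.rpow_le_one (mem_Icc s).1 (mem_Icc s).2 hr

theorem eq_one_of_mul_eq_one_of_mem_semicharSpace (hρ : ρ ∈ semicharSpace S)
    (hρlt : ∀ s : S, s ≠ 1 → ρ s < 1) {x y : S} (hxy : x * y = 1) : x = 1 := by
  obtain ⟨map_one, map_mul, mem_Icc⟩ := hρ
  by_contra hx
  have : ρ x * ρ y < 1 :=
    mul_lt_one_of_nonneg_of_lt_one_left (mem_Icc x).1 (hρlt x hx) (mem_Icc y).2
  rw [← map_mul, hxy, map_one] at this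
  exact this.false

variable [DecidableEq S]

theorem ite_eq_one_mem_semicharSpace (h : ∀ x y : S, x * y = 1 → x = 1) :
    (fun s : S ↦ if s = 1 then (1 : ℝ) else 0) ∈ semicharSpace S := by
  refine ⟨if_pos rfl, fun x y ↦ ?_, fun s ↦ ?_⟩
  · obtain rfl | hx := eq_or_ne x 1
    · simp
    · have hxy : x * y ≠ 1 := mt (h x y) hx
      simp [hx, hxy]
  · dsimp only
    split_ifs <;> simp

theorem rpowPath_mem_semicharSpace (hρ : ρ ∈ semicharSpace S) (hρlt : ∀ s : S, s ≠ 1 → ρ s < 1)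
    (t : unitInterval) : rpowPath ρ t ∈ semicharSpace S := by
  unfold rpowPath
  split_ifs with ht
  · exact rpow_mem_semicharSpace hρ (div_nonneg t.2.1 (sub_nonneg.2 t.2.2))
  · exact ite_eq_one_mem_semicharSpace fun _ _ ↦
      eq_one_of_mul_eq_one_of_mem_semicharSpace hρ hρlt

end MulOneClass

section One

variable {S : Type*} [One S] [DecidableEq S]

theorem rpowPath_zero (ρ : S → ℝ) : rpowPath ρ 0 = fun _ ↦ 1 := by
  funext s
  simp [rpowPath]

theorem rpowPath_one (ρ : S → ℝ) : rpowPath ρ 1 = fun s ↦ if s = 1 then 1 else 0 := by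
  funext s
  simp [rpowPath]

theorem continuous_rpowPath {ρ : S → ℝ} (hρ1 : ρ 1 = 1)
    (hρlt : ∀ s : S, s ≠ 1 → 0 < ρ s ∧ ρ s < 1) : Continuous (rpowPath ρ) := by
  refine continuous_pi fun s ↦ ?_
  obtain rfl | hs := eq_or_ne s 1
  · simpa [rpowPath, hρ1] using continuous_const
  · simp only [rpowPath, if_neg hs]
    exact (continuous_ite_rpow_div_one_sub (hρlt s hs).1 (hρlt s hs).2).comp continuous_subtype_val

end One

theorem rpow_path_in_semicharSpace_general {S : Type*} [MulOneClass S] [DecidableEq S]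
    (ρ : S → ℝ) (hρ1 : ρ 1 = 1) (hρmul : ∀ x y : S, ρ (x * y) = ρ x * ρ y)
    (hρlt : ∀ s : S, s ≠ 1 → 0 < ρ s ∧ ρ s < 1) :
    (∀ t, rpowPath ρ t ∈ semicharSpace S) ∧
      (rpowPath ρ 0 = fun _ ↦ 1) ∧
      (rpowPath ρ 1 = fun s ↦ if s = 1 then 1 else 0) ∧
      ∃ γ : unitInterval → semicharSpace S, Continuous γ ∧ ∀ t, (γ t : S → ℝ) = rpowPath ρ t := by
  have rpowPath_mem := rpowPath_mem_semicharSpace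
    (mem_semicharSpace_of_pos_of_lt_one hρ1 hρmul hρlt) fun s hs ↦ (hρlt s hs).2
  exact ⟨rpowPath_mem, rpowPath_zero ρ, rpowPath_one ρ, fun t ↦ ⟨rpowPath ρ t, rpowPath_mem t⟩,
    (continuous_rpowPath hρ1 hρlt).subtype_mk rpowPath_mem, fun _ ↦ rfl⟩

/-- If `ρ` is a semicharacter of a commutative monoid `S` with `0 < ρ s < 1` off the identity,
then the family `ρ_t = ρ ^ (t/(1-t))` for `t ∈ [0,1)`, extended by the indicator of `{1}` at
`t = 1`, is a continuous path in the semicharacter space `S*_1` (with the topology of pointwise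
convergence) from the constant function `1` to the indicator of `{1}`. -/
theorem rpow_path_in_semicharSpace
    {S : Type*} [CommMonoid S] [DecidableEq S]
    (ρ : S → ℝ) (hρ1 : ρ 1 = 1) (hρmul : ∀ x y : S, ρ (x * y) = ρ x * ρ y)
    (hρlt : ∀ s : S, s ≠ 1 → 0 < ρ s ∧ ρ s < 1)
    (F : unitInterval → S → ℝ)
    (hF : F = fun (t : unitInterval) (s : S) => if (t : ℝ) < 1 then ρ s ^ ((t : ℝ) / (1 - (t : ℝ)))
      else if s = 1 then (1 : ℝ) else 0) :
    (∀ t, F t 1 = 1 ∧ (∀ x y : S, F t (x * y) = F t x * F t y) ∧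
        ∀ s : S, F t s ∈ Set.Icc (0 : ℝ) 1) ∧
      (F 0 = fun _ => 1) ∧
      (F 1 = fun s => if s = 1 then (1 : ℝ) else 0) ∧
      ∃ γ : unitInterval →
          {f : S → ℝ // f 1 = 1 ∧ (∀ x y : S, f (x * y) = f x * f y) ∧
            ∀ s : S, f s ∈ Set.Icc (0 : ℝ) 1},
        Continuous γ ∧ ∀ t, (γ t : S → ℝ) = F t := by
  subst hF
  exact rpow_path_in_semicharSpace_general ρ hρ1 hρmul hρlt
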